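/- Let β > 1. For any a ∈ [0, ∞], the level set E_β(a) = {(x,y) ∈ [0,1)² : lim_n (log W_n^β(x,y))/n exists and equals a} has Hausdorff dimension 2. -/

import Mathlib

open Filter MeasureTheory Set

/-- The β-transformation T_β(x) = βx − ⌊βx⌋. -/
noncomputable def betaT (β : ℝ) : ℝ → ℝ := fun x => β * x - ⌊β * x⌋

/-- The (i+1)-th digit of the β-expansion of x (0-indexed). -/
noncomputable def betaDigit (β x : ℝ) (i : ℕ) : ℤ := ⌊β * (betaT β)^[i] x⌋

/-- A finite word is β-admissible if some x ∈ [0,1) has β-expansion beginning with it. -/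
def IsAdmissibleWord (β : ℝ) (w : List ℤ) : Prop :=
  ∃ x ∈ Set.Ico (0:ℝ) 1, ∀ i (h : i < w.length), w.get ⟨i, h⟩ = betaDigit β x i

/-- An infinite sequence is β-admissible if it is the digit sequence of some x ∈ [0,1). -/
def IsAdmissibleSeq (β : ℝ) (e : ℕ → ℤ) : Prop :=
  ∃ x ∈ Set.Ico (0:ℝ) 1, ∀ i, e i = betaDigit β x i

/-- The basic interval (cylinder) of a word. -/
def cylinder (β : ℝ) (w : List ℤ) : Set ℝ :=
  {x | x ∈ Set.Ico (0:ℝ) 1 ∧ ∀ i (h : i < w.length), betaDigit β x i = w.get ⟨i, h⟩}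

/-- A basic interval is full if its length is β^{-n}. -/
def IsFull (β : ℝ) (w : List ℤ) : Prop :=
  volume (cylinder β w) = ENNReal.ofReal (1 / β ^ w.length)

-- The infinite β-expansion of 1: the periodic modification if the expansion of 1
-- terminates, and the expansion of 1 itself otherwise (0-indexed).
open Classical in
noncomputable def betaStar (β : ℝ) : ℕ → ℤ :=
  if h : ∃ n, betaDigit β 1 n ≠ 0 ∧ ∀ i, n < i → betaDigit β 1 i = 0 then
    fun i =>
      if i % (h.choose + 1) = h.choose then betaDigit β 1 h.choose - 1
      else betaDigit β 1 (i % (h.choose + 1))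
  else betaDigit β 1

/-- Strict lexicographic order on integer sequences. -/
def lexLt (a b : ℕ → ℤ) : Prop := ∃ n, (∀ i, i < n → a i = b i) ∧ a n < b n

/-- l_n(β): the length of the longest run of zeros following the n-th digit
(1-indexed position n) in the infinite β-expansion of 1. -/
noncomputable def zeroRunLen (β : ℝ) (n : ℕ) : ℕ∞ :=
  ⨆ k ∈ {k : ℕ | ∀ j, j < k → betaStar β (n + j) = 0}, (k : ℕ∞)

/-- A₀: the set of bases β > 1 with bounded zero-runs in the expansion of 1. -/
def A0 : Set ℝ := {β | 1 < β ∧ ∃ C : ℕ, ∀ n, 1 ≤ n → zeroRunLen β n ≤ (C : ℕ∞)}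

/-- The waiting time W_n^β(x,y): first k ≥ 1 with T_β^k x in the n-th basic interval of y. -/
noncomputable def waitingTime (β x y : ℝ) (n : ℕ) : ℕ∞ :=
  sInf {k : ℕ∞ | ∃ m : ℕ, k = (m : ℕ∞) ∧ 1 ≤ m ∧
    ∀ i, i < n → betaDigit β ((betaT β)^[m] x) i = betaDigit β y i}

/-- (log W_n^β(x,y)) / n as an extended real, with value ⊤ when W_n = ∞. -/
noncomputable def waitingRatio (β x y : ℝ) (n : ℕ) : EReal :=
  if h : waitingTime β x y n = ⊤ then ⊤
  else (((Real.log ((waitingTime β x y n).untop h : ℕ)) / n : ℝ) : EReal)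

/-!
Only the lower bound is at issue. Counting branches of `T_β ^ n` by total image length shows that,
for every `s < 1`, there are an order `L` and at least `β ^ (L * s)` nonzero words of length `L`
whose basic intervals are full and which can be concatenated freely with each other and with the
zero word. Code `y` by three zero blocks followed by free letters `e`. Code `x` by free letters
`d`, interrupted from block `p k` on by a prefix of `k + 4` blocks of the code of `y` and a closing
zero block. The three zero blocks occur nowhere else in `x`, so the order-`n` basic interval of `y`
is first visited at one of the times `p k * L` with `k` within a bounded distance of `n / L`.
Choosing `log (p k) / k → a * L` therefore puts `(x, y)` in the level set.

The copied prefixes have density zero, so `(x, y)` determines `(d, e)`, read as base-`M` expansions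
with `M ≥ β ^ (L * s)`, in a Hölder way with any exponent `r < s`. Since `(d, e)` covers the unit
square, the level set has dimension at least `2 * r`.
-/

open scoped ENNReal NNReal Topology

section Branches

variable {β : ℝ}

lemma betaT_iterate_succ (β x : ℝ) (n : ℕ) :
    (betaT β)^[n + 1] x = β * (betaT β)^[n] x - betaDigit β x n :=
  Function.iterate_succ_apply' _ _ _

lemma betaDigit_iterate (β x : ℝ) (m i : ℕ) :
    betaDigit β ((betaT β)^[m] x) i = betaDigit β x (m + i) := by
  rw [betaDigit, betaDigit, ← Function.iterate_add_apply, add_comm]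

lemma betaDigit_zero (β : ℝ) (i : ℕ) : betaDigit β 0 i = 0 := by
  have h : (betaT β)^[i] 0 = 0 := Function.iterate_fixed (by simp [betaT]) i
  simp [betaDigit, h]

/-- The interval `[a, a + r / β ^ n)` is a branch of `T_β ^ n`: the first `n` digits are constant on
it and `T_β ^ n` maps it affinely onto `[0, r)`. For `r = 1` this is a full basic interval of order
`n` with left endpoint `a`. -/
structure IsBetaBranch (β : ℝ) (n : ℕ) (a r : ℝ) : Prop where
  nonneg : 0 ≤ a
  pos : 0 < r
  le_one : r ≤ 1
  endpoint_le : a + r / β ^ n ≤ 1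
  iterate_eq : ∀ u ∈ Ico 0 r, (betaT β)^[n] (a + u / β ^ n) = u
  digit_eq : ∀ u ∈ Ico 0 r, ∀ i < n, betaDigit β (a + u / β ^ n) i = betaDigit β a i

lemma isBetaBranch_digit (hβ : 0 < β) {r : ℝ} (hr : 0 < r) (hr1 : r ≤ 1) (j : ℕ)
    (hj : j + r ≤ β) : IsBetaBranch β 1 (j / β) r := by
  have hfloor : ∀ u ∈ Ico 0 r, betaDigit β (j / β + u / β ^ 1) 0 = j := by
    rintro u ⟨hu0, hur⟩
    rw [betaDigit, Function.iterate_zero_apply, pow_one, ← add_div, mul_div_cancel₀ _ hβ.ne',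
      Int.floor_eq_iff]
    push_cast
    constructor <;> linarith
  refine ⟨by positivity, hr, hr1, ?_, fun u hu => ?_, fun u hu i hi => ?_⟩
  · rwa [pow_one, ← add_div, div_le_one hβ]
  · rw [betaT_iterate_succ, hfloor u hu, Function.iterate_zero_apply, pow_one]
    push_cast
    field_simp
    ring
  · obtain rfl : i = 0 := by omega
    have h0 := hfloor 0 ⟨le_rfl, hr⟩
    rw [zero_div, add_zero] at h0
    rw [hfloor u hu, h0]

namespace IsBetaBranch

variable {n m : ℕ} {a b r r' : ℝ}

lemma iterate_self (h : IsBetaBranch β n a r) : (betaT β)^[n] a = 0 := by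
  simpa using h.iterate_eq 0 ⟨le_rfl, h.pos⟩

lemma comp (hβ : 0 < β) (ha : IsBetaBranch β n a r) (hb : IsBetaBranch β m b r')
    (hbr : b + r' / β ^ m ≤ r) : IsBetaBranch β (n + m) (a + b / β ^ n) r' := by
  have hsplit : ∀ u, a + b / β ^ n + u / β ^ (n + m) = a + (b + u / β ^ m) / β ^ n := by
    intro u
    rw [pow_add]
    field_simp
    ring
  have hmem : ∀ u ∈ Ico 0 r', b + u / β ^ m ∈ Ico 0 r := by
    rintro u ⟨hu0, hu⟩
    have hb0 := hb.nonneg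
    have hlt : u / β ^ m < r' / β ^ m := by gcongr
    exact ⟨by positivity, by linarith⟩
  have hbmem : b ∈ Ico 0 r := by simpa using hmem 0 ⟨le_rfl, hb.pos⟩
  have ha0 := ha.nonneg
  have hb0 := hb.nonneg
  refine ⟨by positivity, hb.pos, hb.le_one, ?_, fun u hu => ?_, fun u hu i hi => ?_⟩
  · rw [hsplit]
    have hle : (b + r' / β ^ m) / β ^ n ≤ r / β ^ n := by gcongr
    linarith [ha.endpoint_le]
  · rw [hsplit, add_comm n m, Function.iterate_add_apply, ha.iterate_eq _ (hmem u hu),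
      hb.iterate_eq u hu]
  · rw [hsplit]
    rcases lt_or_ge i n with hin | hin
    · rw [ha.digit_eq _ (hmem u hu) i hin, ha.digit_eq b hbmem i hin]
    · obtain ⟨k, rfl⟩ := Nat.exists_eq_add_of_le hin
      rw [← betaDigit_iterate, ← betaDigit_iterate, ha.iterate_eq _ (hmem u hu),
        ha.iterate_eq b hbmem, hb.digit_eq u hu k (by omega)]

lemma child (hβ : 0 < β) (h : IsBetaBranch β n a r) {j : ℕ} (hj : (j : ℝ) < β * r) :
    IsBetaBranch β (n + 1) (a + j / β / β ^ n) (min 1 (β * r - j)) := by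
  have hmin : (j : ℝ) + min 1 (β * r - j) ≤ β * r := by linarith [min_le_right 1 (β * r - j)]
  have hrβ : β * r ≤ β := mul_le_of_le_one_right hβ.le h.le_one
  refine h.comp hβ (isBetaBranch_digit hβ (lt_min one_pos (by linarith)) (min_le_left _ _) j
    (hmin.trans hrβ)) ?_
  rwa [pow_one, ← add_div, div_le_iff₀' hβ]

lemma zero (hβ : 1 ≤ β) (n : ℕ) : IsBetaBranch β n 0 1 := by
  induction n with
  | zero => constructor <;> simp
  | succ n ih =>
    have hdigit : IsBetaBranch β 1 0 1 := by
      simpa using isBetaBranch_digit (by linarith) one_pos le_rfl 0 (by simpa using hβ)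
    simpa using ih.comp (by linarith) hdigit (by simpa using inv_le_one_of_one_le₀ hβ)

lemma full_extend (hβ : 1 ≤ β) (h : IsBetaBranch β n a r) {k : ℕ} (hk : 1 / β ^ k ≤ r) :
    IsBetaBranch β (n + k) a 1 := by
  simpa using h.comp (by linarith) (zero hβ k) (by simpa using hk)

lemma div_base (hβ : 1 ≤ β) (h : IsBetaBranch β n a 1) : IsBetaBranch β (n + 1) (a / β) 1 := by
  simpa [add_comm] using (zero hβ 1).comp (by linarith) h h.endpoint_le

lemma add_le_of_lt (hβ : 0 < β) (ha : IsBetaBranch β n a r) (hb : IsBetaBranch β n b r')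
    (hab : a < b) : a + r / β ^ n ≤ b := by
  by_contra! hlt
  have hu0 : 0 < (b - a) * β ^ n := mul_pos (by linarith) (by positivity)
  have hur : (b - a) * β ^ n < r := by
    rw [← lt_div_iff₀ (by positivity)]
    linarith
  have himage := ha.iterate_eq _ ⟨hu0.le, hur⟩
  rw [mul_div_cancel_right₀ _ (by positivity), add_sub_cancel, hb.iterate_self] at himage
  exact hu0.ne himage

lemma exists_digit_ne_zero (hβ : 0 < β) (h : IsBetaBranch β n a r) (ha : a ≠ 0) :
    ∃ i < n, betaDigit β a i ≠ 0 := by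
  by_contra! hzero
  have hlinear : ∀ i ≤ n, (betaT β)^[i] a = β ^ i * a := by
    intro i hi
    induction i with
    | zero => simp
    | succ i ih =>
      rw [betaT_iterate_succ, hzero i (by omega), ih (by omega), pow_succ']
      push_cast
      ring
  have hprod := hlinear n le_rfl
  rw [h.iterate_self, zero_eq_mul] at hprod
  exact hprod.elim (by positivity) ha

end IsBetaBranch

end Branches

section BranchCount

lemma sum_min_one_sub_ceil {t : ℝ} (ht : 0 < t) : ∑ j : Fin ⌈t⌉₊, min 1 (t - j) = t := by
  obtain ⟨m, hm⟩ := Nat.exists_eq_succ_of_ne_zero (Nat.ceil_pos.2 ht).ne'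
  obtain ⟨hmt, htm⟩ := (Nat.ceil_eq_iff m.succ_ne_zero).1 hm
  simp only [Nat.succ_eq_add_one, Nat.add_sub_cancel, Nat.cast_add, Nat.cast_one] at hmt htm
  have hone : ∀ j : Fin m, min 1 (t - (j : ℕ)) = 1 := by
    intro j
    have hj : ((j : ℕ) : ℝ) + 1 ≤ m := by exact_mod_cast j.2
    exact min_eq_left (by linarith)
  rw [hm, Nat.succ_eq_add_one, Fin.sum_univ_castSucc]
  simp only [Fin.val_castSucc, Fin.val_last, hone, Finset.sum_const, Finset.card_univ,
    Fintype.card_fin, nsmul_eq_mul, mul_one]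
  rw [min_eq_right (by linarith)]
  ring

lemma IsBetaBranch.child_injective {β : ℝ} (hβ : 0 < β) {n : ℕ} {ι : Type*} {a r : ι → ℝ}
    (h : ∀ i, IsBetaBranch β n (a i) (r i)) (ha : Function.Injective a) :
    Function.Injective fun x : Σ i, Fin ⌈β * r i⌉₊ => a x.1 + (x.2 : ℕ) / β / β ^ n := by
  have himage : ∀ x : Σ i, Fin ⌈β * r i⌉₊,
      (betaT β)^[n] (a x.1 + (x.2 : ℕ) / β / β ^ n) = (x.2 : ℕ) / β := fun x =>
    (h x.1).iterate_eq _ ⟨by positivity, by rw [div_lt_iff₀' hβ]; exact Nat.lt_ceil.1 x.2.2⟩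
  rintro ⟨i, j⟩ ⟨i', j'⟩ hxy
  have hdiv : ((j : ℕ) : ℝ) / β = (j' : ℕ) / β := by
    rw [← himage ⟨i, j⟩, ← himage ⟨i', j'⟩]
    exact congrArg _ hxy
  have hj : (j : ℕ) = j' := by exact_mod_cast (div_left_inj' hβ.ne').1 hdiv
  obtain rfl : i = i' := ha (by simpa [hj] using hxy)
  rw [Fin.ext hj]

lemma exists_betaBranch_family {β : ℝ} (hβ : 0 < β) (n : ℕ) :
    ∃ (ι : Type) (_ : Fintype ι) (a r : ι → ℝ), Function.Injective a ∧
      (∀ i, IsBetaBranch β n (a i) (r i)) ∧ ∑ i, r i = β ^ n ∧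
      (Fintype.card ι : ℝ) ≤ ∑ j ∈ Finset.range (n + 1), β ^ j := by
  induction n with
  | zero =>
    refine ⟨Unit, inferInstance, fun _ => 0, fun _ => 1, fun _ _ _ => rfl, fun _ => ?_, by simp,
      by simp⟩
    constructor <;> simp
  | succ n ih =>
    obtain ⟨ι, _, a, r, hinj, hbranch, hsum, hcard⟩ := ih
    have hpos : ∀ i, 0 < β * r i := fun i => mul_pos hβ (hbranch i).pos
    refine ⟨Σ i, Fin ⌈β * r i⌉₊, inferInstance, _, fun x => min 1 (β * r x.1 - (x.2 : ℕ)),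
      IsBetaBranch.child_injective hβ hbranch hinj,
      fun x => (hbranch x.1).child hβ (Nat.lt_ceil.1 x.2.2), ?_, ?_⟩
    · rw [Fintype.sum_sigma, pow_succ', ← hsum, Finset.mul_sum]
      exact Finset.sum_congr rfl fun i _ => sum_min_one_sub_ceil (hpos i)
    · calc (Fintype.card (Σ i, Fin ⌈β * r i⌉₊) : ℝ) = ∑ i, (⌈β * r i⌉₊ : ℝ) := by simp
        _ ≤ ∑ i, (β * r i + 1) :=
          Finset.sum_le_sum fun i _ => (Nat.ceil_lt_add_one (hpos i).le).le
        _ = β ^ (n + 1) + Fintype.card ι := by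
          rw [Finset.sum_add_distrib, ← Finset.mul_sum, hsum, pow_succ']
          simp
        _ ≤ ∑ j ∈ Finset.range (n + 1 + 1), β ^ j := by
          rw [Finset.sum_range_succ _ (n + 1)]
          linarith

lemma sum_le_card_filter_add {ι : Type*} (s : Finset ι) {r : ι → ℝ} (hr : ∀ i ∈ s, r i ≤ 1)
    {ε : ℝ} (hε : 0 ≤ ε) : ∑ i ∈ s, r i ≤ (s.filter (ε ≤ r ·)).card + ε * s.card := by
  calc ∑ i ∈ s, r i ≤ ∑ i ∈ s, ((if ε ≤ r i then 1 else 0) + ε) := by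
        refine Finset.sum_le_sum fun i hi => ?_
        split_ifs with h <;> linarith [hr i hi]
    _ = _ := by rw [Finset.sum_add_distrib, Finset.sum_boole, Finset.sum_const, nsmul_eq_mul,
      mul_comm]

-- The images of the order-`n` branches have total length `β ^ n`, while there are at most
-- `β / (β - 1) * β ^ n` of them, so a positive proportion have images of length at least `β ^ (-k)`
-- and become full after padding with `k` zeros.
lemma exists_full_branches {β : ℝ} (hβ : 1 < β) :
    ∃ k : ℕ, ∀ n, ∃ A : Finset ℝ, β ^ n / 2 ≤ A.card ∧ ∀ a ∈ A, IsBetaBranch β (n + k) a 1 := by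
  have hβ0 : 0 < β := by linarith
  obtain ⟨k, hk⟩ := pow_unbounded_of_one_lt (2 * (β / (β - 1))) hβ
  refine ⟨k, fun n => ?_⟩
  obtain ⟨ι, _, a, r, hinj, hbranch, hsum, hcard⟩ := exists_betaBranch_family hβ0 n
  have hcount := sum_le_card_filter_add Finset.univ (fun i _ => (hbranch i).le_one)
    (ε := 1 / β ^ k) (by positivity)
  have hcard' : (Fintype.card ι : ℝ) ≤ β / (β - 1) * β ^ n := by
    refine hcard.trans ?_
    rw [geom_sum_eq hβ.ne', div_mul_eq_mul_div, pow_succ']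
    exact div_le_div_of_nonneg_right (by linarith) (by linarith)
  have hshort : 1 / β ^ k * Fintype.card ι ≤ β ^ n / 2 := by
    rw [one_div_mul_eq_div, div_le_iff₀ (by positivity)]
    calc (Fintype.card ι : ℝ) ≤ β / (β - 1) * β ^ n := hcard'
      _ ≤ β ^ k / 2 * β ^ n := mul_le_mul_of_nonneg_right (by linarith) (by positivity)
      _ = β ^ n / 2 * β ^ k := by ring
  refine ⟨(Finset.univ.filter fun i => 1 / β ^ k ≤ r i).map ⟨a, hinj⟩, ?_, ?_⟩
  · rw [Finset.card_map]
    rw [hsum, Finset.card_univ] at hcount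
    linarith
  · simp only [Finset.mem_map, Finset.mem_filter, Finset.mem_univ, true_and,
      Function.Embedding.coeFn_mk]
    rintro _ ⟨i, hi, rfl⟩
    exact (hbranch i).full_extend hβ.le hi

end BranchCount

section BlockCoding

/-- The values `V k` are left endpoints of distinct full basic intervals of order `L` whose words
start with a zero. Blocks of digits coming from such an alphabet can be concatenated freely; the
leading zero, encoded by `add_le`, keeps distinct codes quantitatively apart. -/
structure IsBlockAlphabet {κ : Type*} (β : ℝ) (L : ℕ) (V : κ → ℝ) : Prop where
  one_lt : 1 < β
  order_pos : 0 < L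
  branch : ∀ k, IsBetaBranch β L (V k) 1
  add_le : ∀ k, V k + 1 / β ^ L ≤ 1 / β
  injective : Function.Injective V

/-- The point whose `β`-expansion is the concatenation of the blocks coded by `σ`. -/
noncomputable def blockCode {κ : Type*} (β : ℝ) (L : ℕ) (V : κ → ℝ) (σ : ℕ → κ) : ℝ :=
  ∑' i, V (σ i) / (β ^ L) ^ i

/-- The concatenation of the length-`L` prefixes of the words `w (σ 0)`, `w (σ 1)`, … -/
def blockConcat {κ R : Type*} (L : ℕ) (w : κ → ℕ → R) (σ : ℕ → κ) (n : ℕ) : R :=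
  w (σ (n / L)) (n % L)

section BlockConcat

variable {κ R : Type*} {L : ℕ} (w : κ → ℕ → R) (σ : ℕ → κ)

lemma blockConcat_of_lt {i : ℕ} (hi : i < L) : blockConcat L w σ i = w (σ 0) i := by
  rw [blockConcat, Nat.div_eq_of_lt hi, Nat.mod_eq_of_lt hi]

lemma blockConcat_mul_add (hL : 0 < L) (k i : ℕ) :
    blockConcat L w σ (k * L + i) = blockConcat L w (fun j => σ (k + j)) i := by
  rw [blockConcat, blockConcat, Nat.mul_add_mod_self_right, add_comm (k * L),
    Nat.add_mul_div_right _ _ hL, add_comm k]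

end BlockConcat

namespace IsBlockAlphabet

variable {κ : Type*} {β : ℝ} {L : ℕ} {V : κ → ℝ}

lemma base_pos (h : IsBlockAlphabet β L V) : 0 < β := one_pos.trans h.one_lt

lemma one_lt_pow (h : IsBlockAlphabet β L V) : 1 < β ^ L := one_lt_pow₀ h.one_lt h.order_pos.ne'

lemma pow_pos (h : IsBlockAlphabet β L V) : 0 < β ^ L := one_pos.trans h.one_lt_pow

lemma letter_le (h : IsBlockAlphabet β L V) (k : κ) : V k ≤ 1 / β * (1 - 1 / β ^ L) := by
  have hle : 1 / β * (1 / β ^ L) ≤ 1 / β ^ L :=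
    mul_le_of_le_one_left (one_div_nonneg.2 h.pow_pos.le)
      ((div_le_one h.base_pos).2 h.one_lt.le)
  linarith [h.add_le k]

lemma hasSum_bound (h : IsBlockAlphabet β L V) :
    HasSum (fun i : ℕ => 1 / β * (1 - 1 / β ^ L) / (β ^ L) ^ i) (1 / β) := by
  have hsum := (hasSum_geometric_of_lt_one (inv_nonneg.2 h.pow_pos.le)
    (inv_lt_one_of_one_lt₀ h.one_lt_pow)).mul_left (1 / β * (1 - 1 / β ^ L))
  have hne : 1 - (β ^ L)⁻¹ ≠ 0 := (sub_pos.2 (inv_lt_one_of_one_lt₀ h.one_lt_pow)).ne'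
  rw [one_div (β ^ L), mul_assoc, mul_inv_cancel₀ hne, mul_one] at hsum
  simpa only [one_div, inv_pow, ← div_eq_mul_inv] using hsum

lemma term_nonneg (h : IsBlockAlphabet β L V) (σ : ℕ → κ) (i : ℕ) :
    0 ≤ V (σ i) / (β ^ L) ^ i :=
  div_nonneg (h.branch _).nonneg (_root_.pow_nonneg h.pow_pos.le i)

lemma term_le (h : IsBlockAlphabet β L V) (σ : ℕ → κ) (i : ℕ) :
    V (σ i) / (β ^ L) ^ i ≤ 1 / β * (1 - 1 / β ^ L) / (β ^ L) ^ i :=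
  div_le_div_of_nonneg_right (h.letter_le _) (_root_.pow_nonneg h.pow_pos.le i)

lemma summable (h : IsBlockAlphabet β L V) (σ : ℕ → κ) :
    Summable fun i => V (σ i) / (β ^ L) ^ i :=
  .of_nonneg_of_le (h.term_nonneg σ) (h.term_le σ) h.hasSum_bound.summable

lemma code_nonneg (h : IsBlockAlphabet β L V) (σ : ℕ → κ) : 0 ≤ blockCode β L V σ :=
  tsum_nonneg (h.term_nonneg σ)

lemma code_le (h : IsBlockAlphabet β L V) (σ : ℕ → κ) : blockCode β L V σ ≤ 1 / β := by
  rw [← h.hasSum_bound.tsum_eq]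
  exact (h.summable σ).tsum_le_tsum (h.term_le σ) h.hasSum_bound.summable

lemma code_mem_Ico (h : IsBlockAlphabet β L V) (σ : ℕ → κ) : blockCode β L V σ ∈ Ico 0 1 :=
  ⟨h.code_nonneg σ, (h.code_le σ).trans_lt ((div_lt_one h.base_pos).2 h.one_lt)⟩

lemma code_succ (h : IsBlockAlphabet β L V) (σ : ℕ → κ) :
    blockCode β L V σ = V (σ 0) + blockCode β L V (fun i => σ (1 + i)) / β ^ L := by
  rw [blockCode, blockCode, (h.summable σ).tsum_eq_zero_add, ← tsum_div_const]
  simp only [pow_zero, div_one, pow_succ, div_div, add_comm 1]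

lemma iterate_code (h : IsBlockAlphabet β L V) (σ : ℕ → κ) (k : ℕ) :
    (betaT β)^[k * L] (blockCode β L V σ) = blockCode β L V fun j => σ (k + j) := by
  induction k generalizing σ with
  | zero => simp
  | succ k ih =>
    rw [Nat.succ_mul, Function.iterate_add_apply, h.code_succ,
      (h.branch _).iterate_eq _ (h.code_mem_Ico _), ih]
    simp only [add_assoc, add_left_comm]

lemma betaDigit_code (h : IsBlockAlphabet β L V) (σ : ℕ → κ) (n : ℕ) :
    betaDigit β (blockCode β L V σ) n = blockConcat L (fun k => betaDigit β (V k)) σ n := by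
  conv_lhs => rw [← Nat.div_add_mod' n L, ← betaDigit_iterate, h.iterate_code, h.code_succ]
  exact (h.branch _).digit_eq _ (h.code_mem_Ico _) _ (Nat.mod_lt _ h.order_pos)

lemma le_code_sub_code (h : IsBlockAlphabet β L V) {σ τ : ℕ → κ} (hlt : V (σ 0) < V (τ 0)) :
    (1 - 1 / β) / β ^ L ≤ blockCode β L V τ - blockCode β L V σ := by
  have hsep := (h.branch _).add_le_of_lt h.base_pos (h.branch _) hlt
  have hτ : 0 ≤ blockCode β L V (fun i => τ (1 + i)) / β ^ L :=
    div_nonneg (h.code_nonneg _) h.pow_pos.le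
  have hσ : blockCode β L V (fun i => σ (1 + i)) / β ^ L ≤ 1 / β / β ^ L :=
    div_le_div_of_nonneg_right (h.code_le _) h.pow_pos.le
  rw [h.code_succ σ, h.code_succ τ, sub_div]
  linarith

lemma le_dist_code (h : IsBlockAlphabet β L V) (i : ℕ) {σ τ : ℕ → κ} (hne : σ i ≠ τ i) :
    (1 - 1 / β) / (β ^ L) ^ (i + 1) ≤ dist (blockCode β L V σ) (blockCode β L V τ) := by
  have hgap : 0 ≤ 1 - 1 / β := sub_nonneg.2 ((div_le_one h.base_pos).2 h.one_lt.le)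
  have hfirst : ∀ {σ τ : ℕ → κ}, σ 0 ≠ τ 0 →
      (1 - 1 / β) / β ^ L ≤ dist (blockCode β L V σ) (blockCode β L V τ) := by
    intro σ τ hne
    rw [Real.dist_eq]
    rcases lt_or_gt_of_ne (h.injective.ne hne) with hlt | hlt
    · rw [abs_sub_comm]
      exact (h.le_code_sub_code hlt).trans (le_abs_self _)
    · exact (h.le_code_sub_code hlt).trans (le_abs_self _)
  induction i generalizing σ τ with
  | zero => simpa using hfirst hne
  | succ i ih =>
    by_cases hhead : σ 0 = τ 0
    · rw [h.code_succ σ, h.code_succ τ, hhead, dist_add_left, Real.dist_eq, ← sub_div, abs_div,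
        abs_of_pos h.pow_pos, pow_succ, ← div_div, ← Real.dist_eq]
      have htail : σ (1 + i) ≠ τ (1 + i) := by rwa [add_comm]
      exact div_le_div_of_nonneg_right (ih htail) h.pow_pos.le
    · refine le_trans ?_ (hfirst hhead)
      exact div_le_div_of_nonneg_left hgap h.pow_pos
        (le_self_pow₀ h.one_lt_pow.le (Nat.succ_ne_zero _))

end IsBlockAlphabet

lemma exists_four_mul_rpow_le {β : ℝ} (hβ : 1 < β) {s : ℝ} (hs : s < 1) (c : ℝ) :
    ∃ n : ℕ, 4 ≤ β ^ n ∧ 4 * (β ^ ((n : ℝ) + c)) ^ s ≤ β ^ n := by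
  have hβ0 : 0 < β := by linarith
  have hlim : Tendsto (fun n : ℕ => (β ^ (1 - s)) ^ n) atTop atTop :=
    tendsto_pow_atTop_atTop_of_one_lt (Real.one_lt_rpow hβ (by linarith))
  obtain ⟨n, hn4, hn⟩ := (((tendsto_pow_atTop_atTop_of_one_lt hβ).eventually_ge_atTop 4).and
    (hlim.eventually_ge_atTop (4 * β ^ (c * s)))).exists
  refine ⟨n, hn4, ?_⟩
  calc 4 * (β ^ ((n : ℝ) + c)) ^ s = 4 * β ^ (c * s) * β ^ (n * s) := by
        rw [← Real.rpow_mul hβ0.le, add_mul, Real.rpow_add hβ0]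
        ring
    _ ≤ (β ^ (1 - s)) ^ n * β ^ (n * s) := by gcongr
    _ = β ^ n := by
        rw [← Real.rpow_mul_natCast hβ0.le, ← Real.rpow_add hβ0, ← Real.rpow_natCast]
        ring_nf

lemma exists_blockAlphabet {β : ℝ} (hβ : 1 < β) {s : ℝ} (hs : s < 1) :
    ∃ (L M : ℕ) (V : Option (Fin M) → ℝ),
      IsBlockAlphabet β L V ∧ V none = 0 ∧ (β ^ L) ^ s ≤ (M : ℝ) := by
  have hβ0 : 0 < β := by linarith
  obtain ⟨k, hk⟩ := exists_full_branches hβ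
  obtain ⟨n, hn4, hn⟩ := exists_four_mul_rpow_le hβ hs (k + 1)
  obtain ⟨A, hcard, hbranch⟩ := hk n
  set e := (A.erase 0).equivFin.symm
  have hmem : ∀ i, (e i : ℝ) ≠ 0 ∧ (e i : ℝ) ∈ A := fun i => Finset.mem_erase.1 (e i).2
  refine ⟨n + k + 1, (A.erase 0).card, fun o => o.elim 0 (fun i => e i / β),
    ⟨hβ, Nat.succ_pos _, ?_, ?_, ?_⟩, rfl, ?_⟩
  · rintro (_ | i)
    · exact .zero hβ.le _
    · exact (hbranch _ (hmem i).2).div_base hβ.le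
  · rintro (_ | i)
    · simpa using inv_anti₀ hβ0 (le_self_pow₀ hβ.le (Nat.succ_ne_zero (n + k)))
    · rw [Option.elim_some, pow_succ, ← div_div, ← add_div]
      exact div_le_div_of_nonneg_right (hbranch _ (hmem i).2).endpoint_le hβ0.le
  · refine Option.injective_iff.2 ⟨fun i j hij => ?_, fun ⟨i, hi⟩ => ?_⟩
    · exact e.injective (Subtype.ext ((div_left_inj' hβ0.ne').1 hij))
    · exact div_ne_zero (hmem i).1 hβ0.ne' hi
  · have herase : (A.card : ℝ) ≤ (A.erase 0).card + 1 := by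
      exact_mod_cast Nat.sub_le_iff_le_add.1 A.pred_card_le_card_erase
    have hexp : β ^ (n + k + 1) = β ^ ((n : ℝ) + (k + 1)) := by
      rw [← Real.rpow_natCast]
      push_cast
      ring_nf
    rw [hexp]
    linarith

end BlockCoding

section Splicing

/-- The sequence `none, none, none, e 0, e 1, …`. The three empty letters are a marker that locates
the copies of this sequence inside a spliced one. -/
def withHeader {α : Type*} (e : ℕ → α) (j : ℕ) : Option α :=
  if j < 3 then none else some (e (j - 3))

/-- The positions of a spliced sequence that hold its `k`-th copy: a prefix of length `k + 4` and
one closing letter. -/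
def copyBlock (p : ℕ → ℕ) (k : ℕ) : Finset ℕ := Finset.Ico (p k) (p k + (k + 5))

/-- The position `i` lies in one of the copies of a spliced sequence. -/
def IsCopyPosition (p : ℕ → ℕ) (i : ℕ) : Prop := ∃ k, i ∈ copyBlock p k

open Classical in
/-- The letters of `d` in order, interrupted at each `p k` by the first `k + 4` letters of
`withHeader e`. The letter `none` closing each copy differs from the letter of `withHeader e` at
that place, so the `k`-th copy matches no longer prefix. -/
noncomputable def splice {α : Type*} (p : ℕ → ℕ) (d e : ℕ → α) (i : ℕ) : Option α :=
  if h : IsCopyPosition p i then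
    if i = p h.choose + (h.choose + 4) then none else withHeader e (i - p h.choose)
  else some (d (Nat.count (¬ IsCopyPosition p ·) i))

/-- The position of the letter `d j` in `splice p d e`. -/
noncomputable def freePosition (p : ℕ → ℕ) (j : ℕ) : ℕ := Nat.nth (¬ IsCopyPosition p ·) j

/-- The copies placed at the `p k` are separated, and so sparse that they occupy a set of positions
of density zero. -/
structure IsSparseSeq (p : ℕ → ℕ) : Prop where
  gap : ∀ k, p k + (k + 6) ≤ p (k + 1)
  cube_le : ∀ k, (k + 2) ^ 3 ≤ p k

variable {α : Type*}

lemma withHeader_add_three (e : ℕ → α) (j : ℕ) : withHeader e (j + 3) = some (e j) := by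
  simp [withHeader]

lemma withHeader_eq_none_iff {e : ℕ → α} {j : ℕ} : withHeader e j = none ↔ j < 3 := by
  simp [withHeader]

namespace IsSparseSeq

variable {p : ℕ → ℕ}

lemma strictMono (hp : IsSparseSeq p) : StrictMono p :=
  strictMono_nat_of_lt_succ fun k => by have := hp.gap k; omega

lemma add_le_of_lt (hp : IsSparseSeq p) {j k : ℕ} (hjk : j < k) : p j + (j + 6) ≤ p k :=
  (hp.gap j).trans (hp.strictMono.monotone hjk)

lemma pos (hp : IsSparseSeq p) (k : ℕ) : 0 < p k :=
  lt_of_lt_of_le (by positivity) (hp.cube_le k)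

lemma index_unique (hp : IsSparseSeq p) {i j k : ℕ} (hj : i ∈ copyBlock p j)
    (hk : i ∈ copyBlock p k) : j = k := by
  rw [copyBlock, Finset.mem_Ico] at hj hk
  rcases lt_trichotomy j k with hlt | heq | hlt
  · have := hp.add_le_of_lt hlt
    omega
  · exact heq
  · have := hp.add_le_of_lt hlt
    omega

lemma not_isCopyPosition (hp : IsSparseSeq p) (k : ℕ) : ¬ IsCopyPosition p (p k + (k + 5)) := by
  rintro ⟨j, hj⟩
  rw [copyBlock, Finset.mem_Ico] at hj
  rcases lt_trichotomy j k with hlt | rfl | hlt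
  · have := hp.add_le_of_lt hlt
    omega
  · omega
  · have := hp.add_le_of_lt hlt
    omega

lemma infinite_not_isCopyPosition (hp : IsSparseSeq p) : {i | ¬ IsCopyPosition p i}.Infinite := by
  have hmono : StrictMono fun k => p k + (k + 5) := hp.strictMono.add (strictMono_id.add_const 5)
  exact infinite_of_injective_forall_mem hmono.injective hp.not_isCopyPosition

lemma splice_of_mem_copyBlock (hp : IsSparseSeq p) (d e : ℕ → α) {i k : ℕ}
    (hi : i ∈ copyBlock p k) :
    splice p d e i = if i = p k + (k + 4) then none else withHeader e (i - p k) := by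
  have hcopy : IsCopyPosition p i := ⟨k, hi⟩
  rw [splice, dif_pos hcopy, hp.index_unique hcopy.choose_spec hi]

lemma splice_add (hp : IsSparseSeq p) (d e : ℕ → α) {j k : ℕ} (hj : j < k + 4) :
    splice p d e (p k + j) = withHeader e j := by
  rw [hp.splice_of_mem_copyBlock d e (k := k) (by rw [copyBlock, Finset.mem_Ico]; omega),
    if_neg (by omega), Nat.add_sub_cancel_left]

lemma splice_end (hp : IsSparseSeq p) (d e : ℕ → α) (k : ℕ) :
    splice p d e (p k + (k + 4)) = none := by
  rw [hp.splice_of_mem_copyBlock d e (k := k) (by rw [copyBlock, Finset.mem_Ico]; omega),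
    if_pos rfl]

lemma splice_freePosition (hp : IsSparseSeq p) (d e : ℕ → α) (j : ℕ) :
    splice p d e (freePosition p j) = some (d j) := by
  classical
  have hfree : ¬ IsCopyPosition p (freePosition p j) :=
    Nat.nth_mem_of_infinite hp.infinite_not_isCopyPosition j
  rw [splice, dif_neg hfree, freePosition,
    Nat.count_nth_of_infinite hp.infinite_not_isCopyPosition]

lemma isCopyPosition_of_splice_eq_none {d e : ℕ → α} {b : ℕ} (h : splice p d e b = none) :
    IsCopyPosition p b := by
  by_contra hb
  simp [splice, dif_neg hb] at h

lemma exists_copy_of_splice_eq_none (hp : IsSparseSeq p) {d e : ℕ → α} {b : ℕ}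
    (h0 : splice p d e b = none) (h1 : splice p d e (b + 1) = none) :
    ∃ k, p k ≤ b ∧ b ≤ p k + 1 := by
  obtain ⟨k, hk⟩ := isCopyPosition_of_splice_eq_none h0
  rw [copyBlock, Finset.mem_Ico] at hk
  obtain ⟨j, rfl⟩ := Nat.exists_eq_add_of_le hk.1
  have hj : j < k + 4 := by
    by_contra! hge
    obtain rfl : j = k + 4 := by omega
    exact hp.not_isCopyPosition k (isCopyPosition_of_splice_eq_none h1)
  rw [hp.splice_add d e hj, withHeader_eq_none_iff] at h0
  rw [add_assoc, hp.splice_add d e (by omega), withHeader_eq_none_iff] at h1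
  exact ⟨k, by omega, by omega⟩

end IsSparseSeq

end Splicing

section Density

open Classical in
lemma count_not_add_count (P : ℕ → Prop) (n : ℕ) :
    Nat.count (¬ P ·) n + Nat.count P n = n := by
  rw [Nat.count_eq_card_filter_range, Nat.count_eq_card_filter_range, add_comm,
    Finset.card_filter_add_card_filter_not, Finset.card_range]

lemma le_mul_add_of_cube_le {c i δ : ℝ} (hi : 0 ≤ i) (hδ : 0 < δ) (h : c ^ 3 ≤ 125 * i ^ 2) :
    c ≤ δ * i + 125 / δ ^ 2 := by
  by_contra! hlt
  have hδ2 : 0 < 125 / δ ^ 2 := by positivity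
  have hδi : 0 ≤ δ * i := by positivity
  have hc : 0 < c := by linarith
  have hbig : 125 < δ ^ 2 * c := by
    rw [← div_lt_iff₀' (by positivity)]
    linarith
  have hsq : (δ * i) ^ 2 ≤ c ^ 2 := by gcongr; linarith
  have : c ^ 2 * (δ ^ 2 * c) ≤ c ^ 2 * 125 := by
    calc c ^ 2 * (δ ^ 2 * c) = δ ^ 2 * c ^ 3 := by ring
      _ ≤ δ ^ 2 * (125 * i ^ 2) := by gcongr
      _ = (δ * i) ^ 2 * 125 := by ring
      _ ≤ c ^ 2 * 125 := by gcongr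
  exact hbig.not_ge (le_of_mul_le_mul_left this (by positivity))

namespace IsSparseSeq

variable {p : ℕ → ℕ}

open Classical in
lemma count_isCopyPosition_le (hp : IsSparseSeq p) {i K : ℕ} (hK : i ≤ p K) :
    Nat.count (IsCopyPosition p) i ≤ K * (K + 5) := by
  have hsub : (Finset.range i).filter (IsCopyPosition p) ⊆
      (Finset.range K).biUnion (copyBlock p) := by
    intro j hj
    obtain ⟨hji, k, hk⟩ := Finset.mem_filter.1 hj
    have hkj := (Finset.mem_Ico.1 hk).1
    rw [Finset.mem_range] at hji
    exact Finset.mem_biUnion.2 ⟨k, Finset.mem_range.2 (hp.strictMono.lt_iff_lt.1 (by omega)), hk⟩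
  rw [Nat.count_eq_card_filter_range]
  refine (Finset.card_le_card hsub).trans ((Finset.card_biUnion_le_card_mul _ _ (K + 5)
    fun k hk => ?_).trans_eq (by rw [Finset.card_range]))
  rw [copyBlock, Nat.card_Ico]
  have := Finset.mem_range.1 hk
  omega

open Classical in
lemma cube_count_isCopyPosition_le (hp : IsSparseSeq p) (i : ℕ) :
    Nat.count (IsCopyPosition p) i ^ 3 ≤ 125 * i ^ 2 := by
  have hex : ∃ K, i ≤ p K := ⟨i, hp.strictMono.le_apply⟩
  set K := Nat.find hex
  have hcount : Nat.count (IsCopyPosition p) i ≤ K * (K + 5) :=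
    hp.count_isCopyPosition_le (Nat.find_spec hex)
  rcases K.eq_zero_or_eq_succ_pred with hK | hK
  · have hzero : Nat.count (IsCopyPosition p) i = 0 := by simpa [hK] using hcount
    simp [hzero]
  · have hcube : (K + 1) ^ 3 ≤ i := by
      have hlt := not_le.1 (Nat.find_min hex (m := K.pred) (by omega))
      have hle := hp.cube_le K.pred
      rw [show K.pred + 2 = K + 1 by omega] at hle
      omega
    calc Nat.count (IsCopyPosition p) i ^ 3 ≤ (5 * (K + 1) ^ 2) ^ 3 := by
          gcongr
          nlinarith
      _ = 125 * ((K + 1) ^ 3) ^ 2 := by ring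
      _ ≤ 125 * i ^ 2 := by gcongr

lemma exists_freePosition_le (hp : IsSparseSeq p) {ρ : ℝ} (hρ : 1 < ρ) :
    ∃ C : ℝ, 0 ≤ C ∧ ∀ j, (freePosition p j : ℝ) ≤ ρ * j + C := by
  classical
  have hρ0 : 0 < ρ := by linarith
  have hδ : 0 < 1 - 1 / ρ := sub_pos.2 ((div_lt_one hρ0).2 hρ)
  refine ⟨ρ * (125 / (1 - 1 / ρ) ^ 2), by positivity, fun j => ?_⟩
  set i := freePosition p j
  have hfree : Nat.count (¬ IsCopyPosition p ·) i = j :=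
    Nat.count_nth_of_infinite hp.infinite_not_isCopyPosition j
  have hsplit : (j : ℝ) + Nat.count (IsCopyPosition p) i = i := by
    rw [← hfree]
    exact_mod_cast count_not_add_count (IsCopyPosition p) i
  have hcopy : (Nat.count (IsCopyPosition p) i : ℝ) ≤ (1 - 1 / ρ) * i + 125 / (1 - 1 / ρ) ^ 2 :=
    le_mul_add_of_cube_le (by positivity) hδ (by exact_mod_cast hp.cube_count_isCopyPosition_le i)
  have hbound : 1 / ρ * (i : ℝ) ≤ j + 125 / (1 - 1 / ρ) ^ 2 := by linarith
  rwa [one_div_mul_eq_div, div_le_iff₀' hρ0, mul_add] at hbound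

end IsSparseSeq

end Density

section Occurrences

lemma eq_of_zero_run {R : Type*} [Zero R] {X : ℕ → R} {a b N : ℕ} (ha : ∀ i < N, X (a + i) = 0)
    (haN : X (a + N) ≠ 0) (hb : ∀ i < N, X (b + i) = 0) (hbN : X (b + N) ≠ 0) (hab : a ≤ b + N)
    (hba : b ≤ a + N) : a = b := by
  have hnot_lt : ∀ {a b : ℕ}, X (a + N) ≠ 0 → (∀ i < N, X (b + i) = 0) → b ≤ a + N → ¬ a < b := by
    intro a b haN hb hba hlt
    obtain ⟨i, hi⟩ := Nat.exists_eq_add_of_le hba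
    exact haN (hi ▸ hb i (by omega))
  exact le_antisymm (not_lt.1 (hnot_lt hbN ha hab)) (not_lt.1 (hnot_lt haN hb hba))

variable {α R : Type*} {L : ℕ} {w : Option α → ℕ → R} {p : ℕ → ℕ} {d e : ℕ → α}

lemma IsSparseSeq.blockConcat_splice_add (hp : IsSparseSeq p) (hL : 0 < L) {i j : ℕ}
    (hi : i < (j + 4) * L) :
    blockConcat L w (splice p d e) (p j * L + i) = blockConcat L w (withHeader e) i := by
  rw [blockConcat_mul_add _ _ hL, blockConcat,
    hp.splice_add d e (Nat.div_lt_of_lt_mul (by rwa [mul_comm])), blockConcat]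

variable [Zero R]

lemma blockConcat_withHeader_eq_zero (hw0 : ∀ i, w none i = 0) {i : ℕ} (hi : i < 3 * L) :
    blockConcat L w (withHeader e) i = 0 := by
  rw [blockConcat, withHeader_eq_none_iff.2 (Nat.div_lt_of_lt_mul (by rwa [mul_comm])), hw0]

lemma exists_first_nonzero_blockConcat_withHeader (hL : 0 < L) (hw0 : ∀ i, w none i = 0)
    (hw1 : ∀ a, ∃ i < L, w (some a) i ≠ 0) :
    ∃ N < 4 * L, blockConcat L w (withHeader e) N ≠ 0 ∧
      3 * L ≤ N ∧ ∀ i < N, blockConcat L w (withHeader e) i = 0 := by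
  classical
  obtain ⟨z, hzL, hz⟩ := hw1 (e 0)
  have hzero : blockConcat L w (withHeader e) (3 * L + z) ≠ 0 := by
    rwa [blockConcat_mul_add _ _ hL, blockConcat_of_lt _ _ hzL, withHeader_add_three e 0]
  have hex : ∃ N, blockConcat L w (withHeader e) N ≠ 0 := ⟨_, hzero⟩
  refine ⟨Nat.find hex, ?_, Nat.find_spec hex, ?_, fun i hi => not_not.1 (Nat.find_min hex hi)⟩
  · have := Nat.find_min' hex hzero
    omega
  · by_contra! hlt
    exact Nat.find_spec hex (blockConcat_withHeader_eq_zero hw0 hlt)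

lemma exists_le_mul_lt_add (hL : 0 < L) (m : ℕ) : ∃ b, m ≤ b * L ∧ b * L < m + L := by
  have hdiv := Nat.div_add_mod' (m + L - 1) L
  have hmod := Nat.mod_lt (m + L - 1) hL
  exact ⟨(m + L - 1) / L, by omega, by omega⟩

namespace IsSparseSeq

-- An occurrence starts with `3 * L` zeros, hence contains two consecutive empty blocks and starts
-- near a copy; comparing the first nonzero digits of both makes them coincide.
lemma exists_eq_of_match (hp : IsSparseSeq p) (hL : 0 < L) (hw0 : ∀ i, w none i = 0)
    (hw1 : ∀ a, ∃ i < L, w (some a) i ≠ 0) {m n : ℕ} (hn : 4 * L ≤ n)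
    (hmatch : ∀ i < n,
      blockConcat L w (splice p d e) (m + i) = blockConcat L w (withHeader e) i) :
    ∃ j, m = p j * L := by
  obtain ⟨N, hN4, hN, hN3, hNzero⟩ :=
    exists_first_nonzero_blockConcat_withHeader (e := e) hL hw0 hw1
  obtain ⟨b, hmb, hbm⟩ := exists_le_mul_lt_add hL m
  have hnone : ∀ c, m ≤ c * L → c * L + L ≤ m + 3 * L → splice p d e c = none := by
    intro c hmc hcm
    by_contra hne
    obtain ⟨a, ha⟩ := Option.ne_none_iff_exists'.1 hne
    obtain ⟨i, hiL, hi⟩ := hw1 a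
    obtain ⟨t, ht⟩ := Nat.exists_eq_add_of_le (hmc.trans (Nat.le_add_right _ i))
    refine hi ?_
    rw [← ha, ← add_zero c, ← blockConcat_of_lt w (fun j => splice p d e (c + j)) hiL,
      ← blockConcat_mul_add _ _ hL, ht, hmatch t (by omega), hNzero t (by omega)]
  obtain ⟨j, hjb, hbj⟩ := hp.exists_copy_of_splice_eq_none (hnone b hmb (by omega))
    (hnone (b + 1) (by rw [add_mul]; omega) (by rw [add_mul]; omega))
  have hjbL : p j * L ≤ b * L := Nat.mul_le_mul_right L hjb
  have hbjL : b * L ≤ p j * L + L := by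
    rw [← Nat.succ_mul]
    exact Nat.mul_le_mul_right L hbj
  have hcopy : ∀ i ≤ N, blockConcat L w (splice p d e) (p j * L + i) =
      blockConcat L w (withHeader e) i := fun i hi =>
    hp.blockConcat_splice_add hL (by rw [add_mul]; omega)
  refine ⟨j, eq_of_zero_run (X := blockConcat L w (splice p d e)) (N := N) (fun i hi => ?_) ?_
    (fun i hi => ?_) ?_ (by omega) (by omega)⟩
  · rw [hmatch i (by omega), hNzero i hi]
  · rwa [hmatch N (by omega)]
  · rw [hcopy i hi.le, hNzero i hi]
  · rwa [hcopy N le_rfl]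

lemma lt_of_match (hp : IsSparseSeq p) (hL : 0 < L) (hw0 : ∀ i, w none i = 0)
    (hw1 : ∀ a, ∃ i < L, w (some a) i ≠ 0) {j n : ℕ}
    (hmatch : ∀ i < n,
      blockConcat L w (splice p d e) (p j * L + i) = blockConcat L w (withHeader e) i) :
    n < (j + 5) * L := by
  by_contra! hn
  obtain ⟨i, hiL, hi⟩ := hw1 (e (j + 1))
  have hclose := hmatch ((j + 4) * L + i) (by linarith)
  rw [← add_assoc, ← add_mul, blockConcat_mul_add _ _ hL, blockConcat_mul_add _ _ hL,
    blockConcat_of_lt _ _ hiL, blockConcat_of_lt _ _ hiL] at hclose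
  rw [add_zero, add_zero, hp.splice_end, hw0, withHeader_add_three e (j + 1)] at hclose
  exact hi hclose.symm

end IsSparseSeq

end Occurrences

section WaitingTime

variable {β x y : ℝ}

lemma waitingTime_le {n m : ℕ} (hm : 1 ≤ m)
    (h : ∀ i < n, betaDigit β x (m + i) = betaDigit β y i) : waitingTime β x y n ≤ m :=
  sInf_le ⟨m, rfl, hm, fun i hi => (betaDigit_iterate β x m i).trans (h i hi)⟩

lemma le_waitingTime {n m : ℕ}
    (h : ∀ k, (∀ i < n, betaDigit β x (k + i) = betaDigit β y i) → m ≤ k) :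
    (m : ℕ∞) ≤ waitingTime β x y n := by
  refine le_sInf ?_
  rintro _ ⟨k, rfl, -, hk⟩
  exact_mod_cast h k fun i hi => (betaDigit_iterate β x k i).symm.trans (hk i hi)

lemma waitingRatio_of_eq {n W : ℕ} (h : waitingTime β x y n = W) :
    waitingRatio β x y n = ((Real.log W / n : ℝ) : EReal) := by
  have hne : waitingTime β x y n ≠ ⊤ := h ▸ ENat.natCast_ne_top W
  rw [waitingRatio, dif_neg hne, (WithTop.untop_eq_iff hne).2 h]

lemma coe_log_div_le_coe_log_div {m W : ℕ} (h : m ≤ W) (n : ℕ) :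
    ((Real.log m / n : ℝ) : EReal) ≤ ((Real.log W / n : ℝ) : EReal) := by
  rcases m.eq_zero_or_pos with rfl | hm
  · rw [Nat.cast_zero, Real.log_zero, zero_div]
    exact_mod_cast div_nonneg (Real.log_natCast_nonneg W) n.cast_nonneg
  · exact_mod_cast div_le_div_of_nonneg_right
      (Real.log_le_log (by exact_mod_cast hm) (by exact_mod_cast h)) n.cast_nonneg

lemma waitingRatio_le {n m : ℕ} (h : waitingTime β x y n ≤ m) :
    waitingRatio β x y n ≤ ((Real.log m / n : ℝ) : EReal) := by
  obtain ⟨W, hW, hWm⟩ := ENat.le_natCast_iff.1 h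
  rw [waitingRatio_of_eq hW]
  exact coe_log_div_le_coe_log_div hWm n

lemma le_waitingRatio {n m : ℕ} (h : (m : ℕ∞) ≤ waitingTime β x y n) :
    ((Real.log m / n : ℝ) : EReal) ≤ waitingRatio β x y n := by
  rcases eq_or_ne (waitingTime β x y n) ⊤ with htop | htop
  · rw [waitingRatio, dif_pos htop]
    exact le_top
  · obtain ⟨W, hW⟩ := ENat.ne_top_iff_exists.1 htop
    rw [waitingRatio_of_eq hW.symm]
    exact coe_log_div_le_coe_log_div (by rw [← hW] at h; exact_mod_cast h) n

variable {α : Type*} {L : ℕ} {V : Option α → ℝ} {p : ℕ → ℕ}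

lemma IsBlockAlphabet.exists_betaDigit_some_ne_zero (hV : IsBlockAlphabet β L V)
    (hV0 : V none = 0) (a : α) : ∃ i < L, betaDigit β (V (some a)) i ≠ 0 :=
  (hV.branch _).exists_digit_ne_zero hV.base_pos
    (hV0 ▸ hV.injective.ne (Option.some_ne_none a))

lemma waitingTime_splice_le (hV : IsBlockAlphabet β L V) (hp : IsSparseSeq p) (d e : ℕ → α) {n : ℕ}
    (hn : 3 ≤ n / L) :
    waitingTime β (blockCode β L V (splice p d e)) (blockCode β L V (withHeader e)) n ≤
      (p (n / L - 3) * L : ℕ) := by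
  refine waitingTime_le (Nat.mul_pos (hp.pos _) hV.order_pos) fun i hi => ?_
  rw [hV.betaDigit_code, hV.betaDigit_code]
  refine hp.blockConcat_splice_add hV.order_pos (hi.trans ?_)
  rw [show n / L - 3 + 4 = n / L + 1 by omega]
  exact Nat.lt_div_mul_add hV.order_pos |>.trans_eq (by ring)

lemma le_waitingTime_splice (hV : IsBlockAlphabet β L V) (hV0 : V none = 0) (hp : IsSparseSeq p)
    (d e : ℕ → α) {n : ℕ} (hn : 4 ≤ n / L) :
    (p (n / L - 4) * L : ℕ) ≤
      waitingTime β (blockCode β L V (splice p d e)) (blockCode β L V (withHeader e)) n := by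
  have hL := hV.order_pos
  have hw0 : ∀ i, betaDigit β (V none) i = 0 := fun i => hV0 ▸ betaDigit_zero β i
  have hw1 := hV.exists_betaDigit_some_ne_zero hV0
  refine le_waitingTime fun m hm => ?_
  simp only [hV.betaDigit_code] at hm
  obtain ⟨j, rfl⟩ := hp.exists_eq_of_match hL hw0 hw1 ((Nat.le_div_iff_mul_le hL).1 hn) hm
  have hj : n / L < j + 5 := (Nat.div_lt_iff_lt_mul hL).2 (hp.lt_of_match hL hw0 hw1 hm)
  exact Nat.mul_le_mul_right L (hp.strictMono.monotone (by omega))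

lemma tendsto_waitingRatio_splice (hV : IsBlockAlphabet β L V) (hV0 : V none = 0)
    (hp : IsSparseSeq p) {a : EReal}
    (hlim : ∀ c, Tendsto (fun n : ℕ => ((Real.log (p (n / L - c) * L : ℕ) / n : ℝ) : EReal))
      atTop (𝓝 a)) (d e : ℕ → α) :
    Tendsto (fun n => waitingRatio β (blockCode β L V (splice p d e))
      (blockCode β L V (withHeader e)) n) atTop (𝓝 a) := by
  have hlarge : ∀ᶠ n in atTop, 4 ≤ n / L :=
    (Nat.tendsto_div_const_atTop hV.order_pos.ne').eventually_ge_atTop 4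
  refine tendsto_of_tendsto_of_tendsto_of_le_of_le' (hlim 4) (hlim 3) ?_ ?_
  · filter_upwards [hlarge] with n hn
    exact le_waitingRatio (le_waitingTime_splice hV hV0 hp d e hn)
  · filter_upwards [hlarge] with n hn
    exact waitingRatio_le (waitingTime_splice_le hV hp d e (by omega))

end WaitingTime

section Growth

lemma exists_monotone_tendsto_div_natCast {b : EReal} (hb : 0 ≤ b) :
    ∃ f : ℕ → ℝ, Monotone f ∧ (∀ k, 0 ≤ f k) ∧
      Tendsto (fun k : ℕ => ((f k / k : ℝ) : EReal)) atTop (𝓝 b) := by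
  induction b with
  | bot => simp at hb
  | top =>
    refine ⟨fun k => (k : ℝ) ^ 2, fun i j hij => by dsimp only; gcongr, fun k => by positivity,
      EReal.tendsto_coe_nhds_top_iff.2 (tendsto_natCast_atTop_atTop.congr fun k => ?_)⟩
    dsimp only
    rw [sq, mul_self_div_self]
  | coe b =>
    have hb0 : 0 ≤ b := by exact_mod_cast hb
    refine ⟨fun k => b * k, fun i j hij => by dsimp only; gcongr, fun k => by positivity,
      tendsto_const_nhds.congr' ?_⟩
    filter_upwards [eventually_ne_atTop 0] with k hk
    rw [mul_div_cancel_right₀ _ (by exact_mod_cast hk)]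

/-- A sequence whose logarithm is `f k` up to `O(log k)`; the cube makes it sparse when `f` grows
slowly. -/
noncomputable def sparseSeq (f : ℕ → ℝ) (k : ℕ) : ℕ := ⌈Real.exp (f k)⌉₊ + (k + 2) ^ 3

lemma isSparseSeq_sparseSeq {f : ℕ → ℝ} (hf : Monotone f) : IsSparseSeq (sparseSeq f) := by
  refine ⟨fun k => ?_, fun k => Nat.le_add_left _ _⟩
  have hceil : ⌈Real.exp (f k)⌉₊ ≤ ⌈Real.exp (f (k + 1))⌉₊ :=
    Nat.ceil_mono (Real.exp_le_exp.2 (hf k.le_succ))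
  simp only [sparseSeq]
  nlinarith

lemma le_log_sparseSeq (f : ℕ → ℝ) (k : ℕ) : f k ≤ Real.log (sparseSeq f k) := by
  have hle : Real.exp (f k) ≤ sparseSeq f k :=
    (Nat.le_ceil _).trans (by exact_mod_cast Nat.le_add_right _ _)
  exact (Real.le_log_iff_exp_le ((Real.exp_pos _).trans_le hle)).2 hle

lemma log_sparseSeq_le {f : ℕ → ℝ} (hf : ∀ k, 0 ≤ f k) (k : ℕ) :
    Real.log (sparseSeq f k) ≤ f k + 3 * Real.log (k + 3 : ℕ) := by
  have hexp : 1 ≤ Real.exp (f k) := Real.one_le_exp (hf k)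
  have hle : (sparseSeq f k : ℝ) ≤ Real.exp (f k) * (k + 3 : ℕ) ^ 3 := by
    calc (sparseSeq f k : ℝ) = ⌈Real.exp (f k)⌉₊ + ((k : ℝ) + 2) ^ 3 := by simp [sparseSeq]
      _ ≤ Real.exp (f k) * 2 + Real.exp (f k) * ((k : ℝ) + 2) ^ 3 := by
        gcongr
        · linarith [Nat.ceil_lt_add_one (Real.exp_pos (f k)).le]
        · exact le_mul_of_one_le_left (by positivity) hexp
      _ = Real.exp (f k) * (2 + ((k : ℝ) + 2) ^ 3) := by ring
      _ ≤ Real.exp (f k) * (k + 3 : ℕ) ^ 3 := by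
        gcongr
        push_cast
        nlinarith [k.cast_nonneg (α := ℝ)]
  have hpos : 0 < sparseSeq f k := Nat.add_pos_right _ (by positivity)
  calc Real.log (sparseSeq f k) ≤ Real.log (Real.exp (f k) * (k + 3 : ℕ) ^ 3) :=
        Real.log_le_log (by exact_mod_cast hpos) hle
    _ = f k + 3 * Real.log (k + 3 : ℕ) := by
        rw [Real.log_mul (Real.exp_ne_zero _) (by positivity), Real.log_exp, Real.log_pow]
        norm_cast

lemma tendsto_log_add_div_natCast (c : ℕ) :
    Tendsto (fun k : ℕ => Real.log (k + c : ℕ) / k) atTop (𝓝 0) := by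
  have hlog : Tendsto (fun k : ℕ => Real.log (k + c : ℕ) / (k + c : ℕ)) atTop (𝓝 0) :=
    (Real.isLittleO_log_id_atTop.tendsto_div_nhds_zero.comp
      tendsto_natCast_atTop_atTop).comp (tendsto_add_atTop_nat c)
  have hratio : Tendsto (fun k : ℕ => ((k + c : ℕ) : ℝ) / k) atTop (𝓝 1) := by
    have hc := (tendsto_const_div_atTop_nhds_zero_nat (c : ℝ)).const_add 1
    rw [add_zero] at hc
    refine hc.congr' ?_
    filter_upwards [eventually_ne_atTop 0] with k hk
    have hk0 : (k : ℝ) ≠ 0 := by exact_mod_cast hk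
    rw [Nat.cast_add, add_div, div_self hk0]
  have hprod := hlog.mul hratio
  rw [zero_mul] at hprod
  refine hprod.congr' ?_
  filter_upwards [eventually_ne_atTop 0] with k hk
  exact div_mul_div_cancel₀ (by positivity)

lemma tendsto_add_coe_of_tendsto_zero {u : ℕ → EReal} {b : EReal} (hu : Tendsto u atTop (𝓝 b))
    {g : ℕ → ℝ} (hg : Tendsto g atTop (𝓝 0)) :
    Tendsto (fun k => u k + (g k : EReal)) atTop (𝓝 b) := by
  have hg' := (continuous_coe_real_ereal.tendsto 0).comp hg
  have hsum := (EReal.continuousAt_add (p := (b, ((0 : ℝ) : EReal)))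
    (by simp) (by simp)).tendsto.comp (hu.prodMk_nhds hg')
  simp only [EReal.coe_zero, add_zero] at hsum
  exact hsum

lemma tendsto_log_sparseSeq_div {f : ℕ → ℝ} (hf : ∀ k, 0 ≤ f k) {b : EReal}
    (hb : Tendsto (fun k : ℕ => ((f k / k : ℝ) : EReal)) atTop (𝓝 b)) :
    Tendsto (fun k : ℕ => ((Real.log (sparseSeq f k) / k : ℝ) : EReal)) atTop (𝓝 b) := by
  have herr := (tendsto_log_add_div_natCast 3).const_mul 3
  rw [mul_zero] at herr
  have hupper := tendsto_add_coe_of_tendsto_zero hb herr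
  refine tendsto_of_tendsto_of_tendsto_of_le_of_le hb hupper (fun k => ?_) (fun k => ?_)
  · exact EReal.coe_le_coe (div_le_div_of_nonneg_right (le_log_sparseSeq f k) k.cast_nonneg)
  · rw [← EReal.coe_add, EReal.coe_le_coe_iff, ← mul_div_assoc, ← add_div]
    exact div_le_div_of_nonneg_right (log_sparseSeq_le hf k) k.cast_nonneg

lemma tendsto_natDiv_sub_div (L c : ℕ) :
    Tendsto (fun n : ℕ => ((n / L - c : ℕ) : ℝ) / n) atTop (𝓝 (1 / L)) := by
  have hfloor : Tendsto (fun n : ℕ => ((n / L : ℕ) : ℝ) / n) atTop (𝓝 (1 / L)) := by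
    refine ((tendsto_nat_floor_mul_div_atTop (a := (1 / L : ℝ)) (by positivity)).comp
      tendsto_natCast_atTop_atTop).congr fun n => ?_
    rw [Function.comp_apply, one_div_mul_eq_div, Nat.floor_div_eq_div]
  have hlower := hfloor.sub (tendsto_const_div_atTop_nhds_zero_nat (c : ℝ))
  rw [sub_zero] at hlower
  refine tendsto_of_tendsto_of_tendsto_of_le_of_le hlower hfloor (fun n => ?_) (fun n => ?_)
  · rw [← sub_div]
    refine div_le_div_of_nonneg_right ?_ n.cast_nonneg
    rw [sub_le_iff_le_add, ← Nat.cast_add]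
    exact Nat.cast_le.2 le_tsub_add
  · exact div_le_div_of_nonneg_right (Nat.cast_le.2 (Nat.sub_le _ _)) n.cast_nonneg

lemma exists_isSparseSeq_tendsto {a : EReal} (ha : 0 ≤ a) {L : ℕ} (hL : 0 < L) :
    ∃ p : ℕ → ℕ, IsSparseSeq p ∧ ∀ c, Tendsto
      (fun n : ℕ => ((Real.log (p (n / L - c) * L : ℕ) / n : ℝ) : EReal)) atTop (𝓝 a) := by
  have hL0 : (0 : ℝ) < L := by exact_mod_cast hL
  obtain ⟨f, hmono, hnonneg, hf⟩ := exists_monotone_tendsto_div_natCast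
    (EReal.mul_nonneg ha (EReal.coe_nonneg.2 hL0.le))
  have hp := isSparseSeq_sparseSeq hmono
  refine ⟨sparseSeq f, hp, fun c => ?_⟩
  have hindex : Tendsto (fun n => n / L - c) atTop atTop :=
    (tendsto_sub_atTop_nat c).comp (Nat.tendsto_div_const_atTop hL.ne')
  have hratio : Tendsto (fun n : ℕ => (((n / L - c : ℕ) / n : ℝ) : EReal)) atTop
      (𝓝 ((1 / L : ℝ) : EReal)) :=
    (continuous_coe_real_ereal.tendsto _).comp (tendsto_natDiv_sub_div L c)
  have hmain := EReal.Tendsto.mul ((tendsto_log_sparseSeq_div hnonneg hf).comp hindex) hratio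
    (.inr (EReal.coe_ne_bot _)) (.inr (EReal.coe_ne_top _)) (.inr (by simp [hL.ne']))
    (.inr (by simp [hL.ne']))
  rw [mul_assoc, ← EReal.coe_mul, mul_one_div_cancel hL0.ne', EReal.coe_one, mul_one] at hmain
  refine (tendsto_add_coe_of_tendsto_zero hmain
    (tendsto_const_div_atTop_nhds_zero_nat (Real.log L))).congr' ?_
  filter_upwards [hindex.eventually_ne_atTop 0] with n hn
  have hpos : (sparseSeq f (n / L - c) : ℝ) ≠ 0 := by exact_mod_cast (hp.pos _).ne'
  rw [Function.comp_apply, ← EReal.coe_mul, ← EReal.coe_add,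
    div_mul_div_cancel₀ (by exact_mod_cast hn), ← add_div, Nat.cast_mul,
    Real.log_mul hpos hL0.ne']

end Growth

section Dimension

lemma rpow_pow_succ_le_mul_pow {Q m r s ρ C : ℝ} (hQ : 1 < Q) (hm : Q ^ s ≤ m) (hr : 0 ≤ r)
    (hrs : r * ρ ≤ s) {i j : ℕ} (hi : (i : ℝ) ≤ ρ * j + C) :
    (Q ^ (i + 1)) ^ r ≤ Q ^ ((C + 1) * r) * m ^ j := by
  have hQ0 : 0 < Q := one_pos.trans hQ
  calc (Q ^ (i + 1)) ^ r = Q ^ ((i + 1) * r) := by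
        rw [← Real.rpow_natCast_mul hQ0.le, Nat.cast_succ]
    _ ≤ Q ^ ((C + 1) * r + s * j) := by
        refine Real.rpow_le_rpow_of_exponent_le hQ.le ?_
        nlinarith [j.cast_nonneg (α := ℝ)]
    _ = Q ^ ((C + 1) * r) * (Q ^ s) ^ j := by
        rw [Real.rpow_add hQ0, Real.rpow_mul_natCast hQ0.le]
    _ ≤ Q ^ ((C + 1) * r) * m ^ j := by gcongr

lemma IsBlockAlphabet.exists_dist_ofDigits_le {κ : Type*} {β : ℝ} {L : ℕ} {V : κ → ℝ}
    (hV : IsBlockAlphabet β L V) {M : ℕ} {r s ρ C : ℝ} (hM : (β ^ L) ^ s ≤ M) (hr : 0 ≤ r)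
    (hrs : r * ρ ≤ s) :
    ∃ K : ℝ≥0, ∀ (d d' : ℕ → Fin M) (σ σ' : ℕ → κ),
      (∀ j, d j ≠ d' j → ∃ i : ℕ, (i : ℝ) ≤ ρ * j + C ∧ σ i ≠ σ' i) →
      dist (Real.ofDigits d) (Real.ofDigits d') ≤
        K * dist (blockCode β L V σ) (blockCode β L V σ') ^ r := by
  set Q := β ^ L
  have hQ : 1 < Q := hV.one_lt_pow
  have hQ0 : 0 < Q := hV.pow_pos
  have hgap : 0 < 1 - 1 / β := sub_pos.2 ((div_lt_one hV.base_pos).2 hV.one_lt)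
  have hbound : 0 ≤ Q ^ ((C + 1) * r) / (1 - 1 / β) ^ r := by positivity
  refine ⟨.mk _ hbound, fun d d' σ σ' hsep => ?_⟩
  rw [NNReal.coe_mk]
  by_cases hd : d = d'
  · rw [hd, dist_self]
    positivity
  have hne := Function.ne_iff.1 hd
  classical
  obtain ⟨i, hi, hσ⟩ := hsep _ (Nat.find_spec hne)
  set j := Nat.find hne
  have hpow := rpow_pow_succ_le_mul_pow hQ hM hr hrs hi
  calc dist (Real.ofDigits d) (Real.ofDigits d') ≤ ((M : ℝ) ^ j)⁻¹ :=
        Real.abs_ofDigits_sub_ofDigits_le fun _ hk => not_not.1 (Nat.find_min hne hk)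
    _ ≤ Q ^ ((C + 1) * r) / (Q ^ (i + 1)) ^ r := by
        have hM0 : (0 : ℝ) < M := (Real.rpow_pos_of_pos hQ0 s).trans_le hM
        rw [inv_le_iff_one_le_mul₀ (by positivity), div_mul_eq_mul_div,
          one_le_div (by positivity)]
        exact hpow
    _ = Q ^ ((C + 1) * r) / (1 - 1 / β) ^ r * ((1 - 1 / β) / Q ^ (i + 1)) ^ r := by
        rw [Real.div_rpow hgap.le (by positivity), div_mul_div_cancel₀ (by positivity)]
    _ ≤ _ := by
        gcongr
        exact hV.le_dist_code i hσ

lemma dimH_range_le_of_dist_le {Θ X Y : Type*} [MetricSpace X] [MetricSpace Y] {u : Θ → X}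
    {v : Θ → Y} {K r : ℝ≥0} (hr : 0 < r)
    (h : ∀ a b, dist (v a) (v b) ≤ K * dist (u a) (u b) ^ (r : ℝ)) :
    dimH (range v) ≤ dimH (range u) / r := by
  rcases isEmpty_or_nonempty Θ with hΘ | hΘ
  · rw [range_eq_empty v, dimH_empty]
    exact zero_le
  set g := v ∘ Function.invFun u
  have hg : ∀ θ, g (u θ) = v θ := fun θ => by
    have hdist := h (Function.invFun u (u θ)) θ
    rw [Function.invFun_eq (f := u) ⟨θ, rfl⟩, dist_self, Real.zero_rpow (by exact_mod_cast hr.ne'),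
      mul_zero] at hdist
    exact dist_le_zero.1 hdist
  have hholder : HolderOnWith K r g (range u) := by
    rintro _ ⟨a, rfl⟩ _ ⟨b, rfl⟩
    rw [hg, hg, edist_dist, edist_dist, ENNReal.ofReal_rpow_of_nonneg dist_nonneg r.coe_nonneg,
      ← ENNReal.ofReal_coe_nnreal, ← ENNReal.ofReal_mul K.coe_nonneg]
    exact ENNReal.ofReal_le_ofReal (h a b)
  rw [← funext hg, range_comp' g u]
  exact hholder.dimH_image_le hr

lemma dimH_range_ofDigits_prodMap {M : ℕ} (hM : 1 < M) :
    dimH (range (Prod.map (Real.ofDigits (b := M)) (Real.ofDigits (b := M)))) = 2 := by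
  have hsub : Ioo (0 : ℝ) 1 ⊆ range (Real.ofDigits (b := M)) := fun x hx =>
    let ⟨d, _, hd⟩ := Real.ofDigits_SurjOn hM (Ioo_subset_Icc_self hx)
    ⟨d, hd⟩
  have hint : (interior (range (Prod.map (Real.ofDigits (b := M))
      (Real.ofDigits (b := M))))).Nonempty := by
    rw [range_prodMap]
    exact ((nonempty_Ioo.2 one_pos).prod (nonempty_Ioo.2 one_pos)).mono
      (interior_maximal (prod_mono hsub hsub) (isOpen_Ioo.prod isOpen_Ioo))
  rw [Real.dimH_of_nonempty_interior hint]
  simp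

/-- The set `E_β(a)` of pairs whose quantitative waiting time indicator is `a`. -/
def waitingLevelSet (β : ℝ) (a : EReal) : Set (ℝ × ℝ) :=
  {q | q.1 ∈ Ico 0 1 ∧ q.2 ∈ Ico 0 1 ∧ Tendsto (waitingRatio β q.1 q.2) atTop (𝓝 a)}

/-- The pair of points obtained by adding a header to the second sequence of a pair of letter
sequences and splicing its prefixes into the first. -/
noncomputable def splicedPair {α : Type*} (β : ℝ) (L : ℕ) (V : Option α → ℝ) (p : ℕ → ℕ)
    (θ : (ℕ → α) × (ℕ → α)) : ℝ × ℝ :=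
  (blockCode β L V (splice p θ.1 θ.2), blockCode β L V (withHeader θ.2))

lemma IsBlockAlphabet.exists_dist_ofDigits_prodMap_le {β : ℝ} {L M : ℕ}
    {V : Option (Fin M) → ℝ} (hV : IsBlockAlphabet β L V) {p : ℕ → ℕ} (hp : IsSparseSeq p)
    {r s : ℝ} (hr : 0 < r) (hrs : r < s) (hM : (β ^ L) ^ s ≤ M) :
    ∃ K : ℝ≥0, ∀ θ θ', dist (Prod.map Real.ofDigits Real.ofDigits θ)
      (Prod.map Real.ofDigits Real.ofDigits θ') ≤
        K * dist (splicedPair β L V p θ) (splicedPair β L V p θ') ^ r := by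
  have hρ : 1 < s / r := (one_lt_div hr).2 hrs
  obtain ⟨C, hC, hfree⟩ := hp.exists_freePosition_le hρ
  obtain ⟨K, hK⟩ := hV.exists_dist_ofDigits_le (C := C + 3) hM hr.le (mul_div_cancel₀ s hr.ne').le
  refine ⟨K, fun θ θ' => max_le ?_ ?_⟩
  · refine (hK _ _ (splice p θ.1 θ.2) (splice p θ'.1 θ'.2) fun j hj =>
      ⟨freePosition p j, by linarith [hfree j], ?_⟩).trans ?_
    · simpa only [hp.splice_freePosition, ne_eq, Option.some_inj] using hj
    · gcongr
      exact le_max_left _ _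
  · refine (hK _ _ (withHeader θ.2) (withHeader θ'.2) fun j hj => ⟨j + 3, ?_, ?_⟩).trans ?_
    · push_cast
      nlinarith [j.cast_nonneg (α := ℝ)]
    · simpa only [withHeader_add_three, ne_eq, Option.some_inj] using hj
    · gcongr
      exact le_max_right _ _

lemma two_mul_le_dimH_waitingLevelSet {β : ℝ} (hβ : 1 < β) {a : EReal} (ha : 0 ≤ a) {r : ℝ≥0}
    (hr : 0 < r) (hr1 : r < 1) : 2 * (r : ℝ≥0∞) ≤ dimH (waitingLevelSet β a) := by
  obtain ⟨s, hrs, hs⟩ := exists_between hr1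
  obtain ⟨L, M, V, hV, hV0, hM⟩ := exists_blockAlphabet hβ (s := s) (by exact_mod_cast hs)
  have hM1 : 1 < M := by
    exact_mod_cast (Real.one_lt_rpow hV.one_lt_pow (NNReal.coe_pos.2 (hr.trans hrs))).trans_le hM
  obtain ⟨p, hp, hlim⟩ := exists_isSparseSeq_tendsto ha hV.order_pos
  obtain ⟨K, hK⟩ := hV.exists_dist_ofDigits_prodMap_le hp (NNReal.coe_pos.2 hr)
    (NNReal.coe_lt_coe.2 hrs) hM
  have hsub : range (splicedPair β L V p) ⊆ waitingLevelSet β a := by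
    rintro _ ⟨θ, rfl⟩
    exact ⟨hV.code_mem_Ico _, hV.code_mem_Ico _,
      tendsto_waitingRatio_splice hV hV0 hp hlim θ.1 θ.2⟩
  refine (ENNReal.mul_le_of_le_div ?_).trans (dimH_mono hsub)
  rw [← dimH_range_ofDigits_prodMap hM1]
  exact dimH_range_le_of_dist_le hr hK

end Dimension

/-- The level set E_β(a) = {(x,y) : R^β(x,y) = a} has Hausdorff dimension 2. -/
theorem dimH_waiting_level_set (β : ℝ) (hβ : 1 < β) (a : EReal) (h0 : 0 ≤ a) :
    dimH {p : ℝ × ℝ | p.1 ∈ Set.Ico (0:ℝ) 1 ∧ p.2 ∈ Set.Ico (0:ℝ) 1 ∧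
      Filter.Tendsto (fun n => waitingRatio β p.1 p.2 n) Filter.atTop (nhds a)} = 2 := by
  change dimH (waitingLevelSet β a) = 2
  apply le_antisymm
  · calc dimH (waitingLevelSet β a) ≤ dimH (univ : Set (ℝ × ℝ)) := dimH_mono (subset_univ _)
      _ = 2 := by simp [Real.dimH_univ_eq_finrank]
  · refine ENNReal.le_of_forall_nnreal_lt fun c hc => ?_
    rcases eq_zero_or_pos c with rfl | hc0
    · exact zero_le
    have hc2 : c / 2 < 1 := (div_lt_one two_pos).2 (by exact_mod_cast hc)
    calc (c : ℝ≥0∞) = 2 * (c / 2 : ℝ≥0) := by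
          rw [← ENNReal.coe_ofNat, ← ENNReal.coe_mul, mul_div_cancel₀ c two_ne_zero]
      _ ≤ dimH (waitingLevelSet β a) :=
          two_mul_le_dimH_waitingLevelSet hβ h0 (half_pos hc0) hc2
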